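/- Let ρ_AB and τ_AB be separable density matrices on ℂ^n ⊗ ℂ^n, and suppose the linear map Ψ_{B→A}^τ : E ↦ Tr_B[(I_A ⊗ E) τ_AB] on n×n complex matrices is bijective. Then there exists δ > 0 such that for every ε with 0 < ε < δ, the set Λ_A((1−ε) ρ_AB + ε τ_AB) admits a preparation-and-measurement noncontextual model. -/

import Mathlib

open Matrix
open scoped Kronecker ComplexOrder BigOperators

noncomputable section

/-- A density matrix: positive semidefinite with trace 1. -/
def IsDensity {d : Type*} [Fintype d] [DecidableEq d] (ρ : Matrix d d ℂ) : Prop :=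
  ρ.PosSemidef ∧ ρ.trace = 1

/-- Partial trace over the second (B) factor. -/
def trB {m n : ℕ} (ρ : Matrix (Fin m × Fin n) (Fin m × Fin n) ℂ) :
    Matrix (Fin m) (Fin m) ℂ := fun i j => ∑ k, ρ (i, k) (j, k)

/-- Partial trace over the first (A) factor. -/
def trA {m n : ℕ} (ρ : Matrix (Fin m × Fin n) (Fin m × Fin n) ℂ) :
    Matrix (Fin n) (Fin n) ℂ := fun k l => ∑ i, ρ (i, k) (i, l)

/-- The set of states remotely preparable on Alice's side. -/
def LambdaA {m n : ℕ} (ρ : Matrix (Fin m × Fin n) (Fin m × Fin n) ℂ) :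
    Set (Matrix (Fin m) (Fin m) ℂ) :=
  {σ | IsDensity σ ∧ ∃ E : Matrix (Fin n) (Fin n) ℂ, E.PosSemidef ∧
    σ = trB (((1 : Matrix (Fin m) (Fin m) ℂ) ⊗ₖ E) * ρ)}

/-- The set of states remotely preparable on Bob's side. -/
def LambdaB {m n : ℕ} (ρ : Matrix (Fin m × Fin n) (Fin m × Fin n) ℂ) :
    Set (Matrix (Fin n) (Fin n) ℂ) :=
  {σ | IsDensity σ ∧ ∃ E : Matrix (Fin m) (Fin m) ℂ, E.PosSemidef ∧
    σ = trA ((E ⊗ₖ (1 : Matrix (Fin n) (Fin n) ℂ)) * ρ)}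

/-- A preparation-and-measurement noncontextual model for a set `K` of density matrices. -/
def HasNCModel {d : ℕ} (K : Set (Matrix (Fin d) (Fin d) ℂ)) : Prop :=
  ∃ (L : ℕ) (N ω : Fin L → Matrix (Fin d) (Fin d) ℂ),
    (∀ l, (N l).IsHermitian) ∧ (∀ l, IsDensity (ω l)) ∧
    (∀ ρ ∈ K, ∀ l, 0 ≤ (ρ * N l).trace) ∧
    (∀ ρ ∈ K, ∑ l, (ρ * N l).trace = 1) ∧
    (∀ ρ ∈ K, ∀ M : Matrix (Fin d) (Fin d) ℂ, M.PosSemidef → (1 - M).PosSemidef →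
      (ρ * M).trace = ∑ l, (ρ * N l).trace * (ω l * M).trace)

/-- Separability of a bipartite density matrix. -/
def Separable {m n : ℕ} (ρ : Matrix (Fin m × Fin n) (Fin m × Fin n) ℂ) : Prop :=
  ∃ (L : ℕ) (ω : Fin L → Matrix (Fin m) (Fin m) ℂ)
    (κ : Fin L → Matrix (Fin n) (Fin n) ℂ),
    (∀ l, IsDensity (ω l)) ∧ (∀ l, (κ l).PosSemidef) ∧ ρ = ∑ l, ω l ⊗ₖ κ l

lemma trB_add {m n : ℕ} (a b : Matrix (Fin m × Fin n) (Fin m × Fin n) ℂ) :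
    trB (a + b) = trB a + trB b := by
  ext i j; simp [trB, Finset.sum_add_distrib]

lemma trB_smul {m n : ℕ} (c : ℂ) (a : Matrix (Fin m × Fin n) (Fin m × Fin n) ℂ) :
    trB (c • a) = c • trB a := by
  ext i j; simp [trB, Finset.mul_sum]

lemma trB_sum {m n L : ℕ} (f : Fin L → Matrix (Fin m × Fin n) (Fin m × Fin n) ℂ) :
    trB (∑ l, f l) = ∑ l, trB (f l) := by
  ext i j
  simp only [trB, Matrix.sum_apply]
  rw [Finset.sum_comm]

lemma trB_kron {m n : ℕ} (a : Matrix (Fin m) (Fin m) ℂ) (b : Matrix (Fin n) (Fin n) ℂ) :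
    trB (a ⊗ₖ b) = b.trace • a := by
  ext i j
  simp [trB, Matrix.trace, mul_comm, Finset.mul_sum]

/-- The steering map as a linear map. -/
def steerMap {n : ℕ} (ρ : Matrix (Fin n × Fin n) (Fin n × Fin n) ℂ) :
    Matrix (Fin n) (Fin n) ℂ →ₗ[ℂ] Matrix (Fin n) (Fin n) ℂ where
  toFun E := trB (((1 : Matrix (Fin n) (Fin n) ℂ) ⊗ₖ E) * ρ)
  map_add' E F := by rw [Matrix.kronecker_add, Matrix.add_mul, trB_add]
  map_smul' c E := by rw [Matrix.kronecker_smul, Matrix.smul_mul, trB_smul]; rfl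

lemma steerMap_apply {n : ℕ} (ρ : Matrix (Fin n × Fin n) (Fin n × Fin n) ℂ)
    (E : Matrix (Fin n) (Fin n) ℂ) :
    steerMap ρ E = trB (((1 : Matrix (Fin n) (Fin n) ℂ) ⊗ₖ E) * ρ) := rfl

lemma steerMap_sep {n L : ℕ} (ω κ : Fin L → Matrix (Fin n) (Fin n) ℂ)
    (E : Matrix (Fin n) (Fin n) ℂ) :
    steerMap (∑ l, ω l ⊗ₖ κ l) E = ∑ l, (E * κ l).trace • ω l := by
  rw [steerMap_apply, Finset.mul_sum, trB_sum]
  refine Finset.sum_congr rfl fun l _ => ?_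
  rw [← Matrix.mul_kronecker_mul, Matrix.one_mul, trB_kron]

lemma exists_trace_rep {n : ℕ} (f : Matrix (Fin n) (Fin n) ℂ →ₗ[ℂ] ℂ) :
    ∃ N : Matrix (Fin n) (Fin n) ℂ, ∀ σ, (σ * N).trace = f σ := by
  refine ⟨Matrix.of fun j i => f (Matrix.single i j 1), fun σ => ?_⟩
  conv_rhs => rw [Matrix.matrix_eq_sum_single σ]
  simp only [map_sum, Matrix.trace, Matrix.diag]
  refine Finset.sum_congr rfl fun i _ => ?_
  rw [Matrix.mul_apply]
  refine Finset.sum_congr rfl fun j _ => ?_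
  have : Matrix.single i j (σ i j) = σ i j • Matrix.single i j (1 : ℂ) := by
    rw [Matrix.smul_single]; simp
  rw [this, map_smul, smul_eq_mul, Matrix.of_apply]

open scoped MatrixOrder Matrix.Norms.L2Operator in
lemma trace_mul_nonneg' {n : ℕ} {A B : Matrix (Fin n) (Fin n) ℂ}
    (hA : A.PosSemidef) (hB : B.PosSemidef) : 0 ≤ (A * B).trace := by
  obtain ⟨C, rfl⟩ := CStarAlgebra.nonneg_iff_eq_star_mul_self.mp hA.nonneg
  rw [Matrix.star_eq_conjTranspose, Matrix.mul_assoc, Matrix.trace_mul_comm]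
  exact (hB.mul_mul_conjTranspose_same C).trace_nonneg

lemma model_of_inj {n : ℕ} (ρ : Matrix (Fin n × Fin n) (Fin n × Fin n) ℂ)
    (hs : Separable ρ) (hinj : Function.Injective (steerMap ρ)) :
    HasNCModel (LambdaA ρ) := by
  obtain ⟨L, ω, κ, hω, hκ, hρ⟩ := hs
  obtain ⟨g, hg⟩ := LinearMap.exists_leftInverse_of_injective (steerMap ρ)
    (LinearMap.ker_eq_bot.mpr hinj)
  have hg' : ∀ E, g (steerMap ρ E) = E := fun E => by
    simpa using congrArg (fun f => f E) hg
  have hrep : ∀ l, ∃ N : Matrix (Fin n) (Fin n) ℂ, ∀ σ, (σ * N).trace = (g σ * κ l).trace := by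
    intro l
    exact exists_trace_rep ((Matrix.traceLinearMap (Fin n) ℂ ℂ) ∘ₗ
      (LinearMap.mulRight ℂ (κ l)) ∘ₗ g)
  choose N hN using hrep
  have key : ∀ σ ∈ LambdaA ρ, ∃ E : Matrix (Fin n) (Fin n) ℂ, E.PosSemidef ∧
      σ = ∑ l, (E * κ l).trace • ω l ∧
      ∀ l, (σ * ((1/2 : ℂ) • (N l + (N l)ᴴ))).trace = (E * κ l).trace := by
    rintro σ ⟨hσ, E, hE, rfl⟩
    rw [← steerMap_apply] at hσ ⊢
    refine ⟨E, hE, ?_, fun l => ?_⟩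
    · rw [hρ, steerMap_sep]
    · have h1 := hN l (steerMap ρ E)
      rw [hg'] at h1
      have h2 : (steerMap ρ E * (N l)ᴴ).trace = (E * κ l).trace := by
        have h3 : (steerMap ρ E * (N l)ᴴ).trace = star ((steerMap ρ E * N l).trace) := by
          rw [← Matrix.trace_conjTranspose, Matrix.conjTranspose_mul, hσ.1.1.eq,
            Matrix.trace_mul_comm]
        rw [h3, h1]
        exact (IsSelfAdjoint.of_nonneg (trace_mul_nonneg' hE (hκ l))).star_eq
      rw [Matrix.mul_smul, Matrix.trace_smul, Matrix.mul_add, Matrix.trace_add, h1, h2, smul_eq_mul]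
      ring
  refine ⟨L, fun l => (1/2 : ℂ) • (N l + (N l)ᴴ), ω, fun l => ?_, hω, ?_, ?_, ?_⟩
  · simp [Matrix.IsHermitian, Matrix.conjTranspose_smul, add_comm]
  · intro σ hσ l
    obtain ⟨E, hE, -, h⟩ := key σ hσ
    rw [h]; exact trace_mul_nonneg' hE (hκ l)
  · intro σ hσ
    obtain ⟨E, hE, h1, h⟩ := key σ hσ
    simp only [h]
    have := hσ.1.2
    rw [h1, Matrix.trace_sum] at this
    simpa [Matrix.trace_smul, (hω _).2] using this
  · intro σ hσ M _ _
    obtain ⟨E, hE, h1, h⟩ := key σ hσ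
    simp only [h]
    rw [h1, Finset.sum_mul, Matrix.trace_sum]
    simp [Matrix.trace_smul]

lemma separable_add {n : ℕ} {ρ τ : Matrix (Fin n × Fin n) (Fin n × Fin n) ℂ}
    (hρ : Separable ρ) (hτ : Separable τ) : Separable (ρ + τ) := by
  obtain ⟨L, ω, κ, hω, hκ, rfl⟩ := hρ
  obtain ⟨L', ω', κ', hω', hκ', rfl⟩ := hτ
  refine ⟨L + L', Fin.append ω ω', Fin.append κ κ', ?_, ?_, ?_⟩
  · intro l; refine Fin.addCases (fun i => ?_) (fun i => ?_) l <;> simp [hω, hω']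
  · intro l; refine Fin.addCases (fun i => ?_) (fun i => ?_) l <;> simp [hκ, hκ']
  · simp [Fin.sum_univ_add]

lemma separable_smul {n : ℕ} {ρ : Matrix (Fin n × Fin n) (Fin n × Fin n) ℂ}
    (hρ : Separable ρ) {c : ℝ} (hc : 0 ≤ c) : Separable ((c : ℂ) • ρ) := by
  obtain ⟨L, ω, κ, hω, hκ, rfl⟩ := hρ
  refine ⟨L, ω, fun l => (c : ℂ) • κ l, hω, fun l => (hκ l).smul (by exact_mod_cast hc), ?_⟩
  simp [Finset.smul_sum, Matrix.kronecker_smul]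

lemma exists_delta {V : Type*} [AddCommGroup V] [Module ℂ V] [FiniteDimensional ℂ V]
    (A B : V →ₗ[ℂ] V) (hB : Function.Bijective B) :
    ∃ δ : ℝ, 0 < δ ∧ δ ≤ 1 ∧ ∀ ε : ℝ, 0 < ε → ε < δ →
      ∀ v, (((1 - ε : ℝ) : ℂ) • A v + (ε : ℂ) • B v = 0) → v = 0 := by
  let e := LinearEquiv.ofBijective B hB
  let T : Module.End ℂ V := e.symm.toLinearMap ∘ₗ A
  have hfin : {μ : ℂ | T.HasEigenvalue μ}.Finite := Module.End.finite_hasEigenvalue T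
  have hopen : IsOpen (({μ : ℂ | T.HasEigenvalue μ} \ {0})ᶜ) :=
    (hfin.subset Set.sdiff_subset).isClosed.isOpen_compl
  obtain ⟨r, hr, hball⟩ := Metric.isOpen_iff.mp hopen 0 (by simp)
  refine ⟨min (1/2) (r/2), by positivity, (min_le_left _ _).trans (by norm_num), ?_⟩
  intro ε h0 hlt v hv
  have h1 : ε < 1/2 := hlt.trans_le (min_le_left _ _)
  have h2 : ε < r/2 := hlt.trans_le (min_le_right _ _)
  have h3 : 0 < 1 - ε := by linarith
  have h4 : (((1 - ε : ℝ)) : ℂ) ≠ 0 := by exact_mod_cast h3.ne'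
  by_contra hne
  have hq : 0 < ε / (1 - ε) := by positivity
  have hTv : T v = ((-(ε / (1 - ε)) : ℝ) : ℂ) • v := by
    change e.symm (A v) = _
    rw [LinearEquiv.symm_apply_eq, map_smul]
    change A v = _ • B v
    have h5 : A v = (((1 - ε : ℝ)) : ℂ)⁻¹ • ((((1 - ε : ℝ)) : ℂ) • A v) := by
      rw [smul_smul, inv_mul_cancel₀ h4, one_smul]
    rw [h5, eq_neg_of_add_eq_zero_left hv, smul_neg, smul_smul, ← neg_smul]
    congr 1
    push_cast
    rw [div_eq_inv_mul]
  have hev : T.HasEigenvalue ((-(ε / (1 - ε)) : ℝ) : ℂ) :=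
    Module.End.hasEigenvalue_of_hasEigenvector
      ⟨Module.End.mem_eigenspace_iff.mpr hTv, hne⟩
  have hmem : ((-(ε / (1 - ε)) : ℝ) : ℂ) ∈ Metric.ball (0 : ℂ) r := by
    rw [mem_ball_zero_iff, Complex.norm_real, norm_neg, Real.norm_of_nonneg hq.le, div_lt_iff₀ h3]
    nlinarith
  refine hball hmem ⟨hev, ?_⟩
  simp only [Set.mem_singleton_iff, Complex.ofReal_eq_zero]
  linarith

theorem separable_to_robust_noncontextual {n : ℕ}
    (ρ τ : Matrix (Fin n × Fin n) (Fin n × Fin n) ℂ)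
    (hρd : IsDensity ρ) (hρs : Separable ρ)
    (hτd : IsDensity τ) (hτs : Separable τ)
    (hbij : Function.Bijective (fun E : Matrix (Fin n) (Fin n) ℂ =>
      trB (((1 : Matrix (Fin n) (Fin n) ℂ) ⊗ₖ E) * τ))) :
    ∃ δ : ℝ, 0 < δ ∧ ∀ ε : ℝ, 0 < ε → ε < δ →
      HasNCModel (LambdaA (((1 - ε : ℝ) : ℂ) • ρ + ((ε : ℝ) : ℂ) • τ)) := by
  obtain ⟨δ, hδ, hδ1, h⟩ := exists_delta (steerMap ρ) (steerMap τ) hbij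
  refine ⟨δ, hδ, fun ε h0 hlt => model_of_inj _ ?_ ?_⟩
  · exact separable_add (separable_smul hρs (by linarith)) (separable_smul hτs h0.le)
  · rw [injective_iff_map_eq_zero]
    intro E hE
    refine h ε h0 hlt E ?_
    rw [← hE]
    simp only [steerMap_apply, Matrix.mul_add, Matrix.mul_smul, trB_add, trB_smul]
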